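/- There exist absolute constants C > 0 and γ₀ ∈ (0,1) such that the following holds. Let γ ∈ (n^{-1/10}, γ₀) and α ∈ (n^{-1/10}, 1/16) with α smaller than an absolute constant, let c' ≤ γ√n + log₂(2/γ), and let A ⊆ {0,1}^n have size |A| ≥ 2^{n−c'}. Let G be sampled from the Erdős–Rényi distribution G(n, α/n), let r be its number of edges and M ∈ {0,1}^{r×n} its edge incidence matrix over GF(2), define p_M(z) = |{x ∈ A : Mx = z}|/|A| for z ∈ {0,1}^r, and let U_r denote the uniform distribution on {0,1}^r. Then E_G[ ‖p_M − U_r‖²_tvd ] ≤ C·(γ² + α³). -/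

import Mathlib

open Finset

/-- The set of potential edges of a graph on vertex set `Fin n`: all non-diagonal
unordered pairs. -/
noncomputable def potentialEdges (n : ℕ) : Finset (Sym2 (Fin n)) :=
  univ.filter (fun e => ¬ e.IsDiag)

/-- The probability that an Erdős–Rényi graph `G(n, p)` (each potential edge included
independently with probability `p`) has edge set exactly `S`. -/
noncomputable def erWeight (n : ℕ) (p : ℝ) (S : Finset (Sym2 (Fin n))) : ℝ :=
  p ^ S.card * (1 - p) ^ ((potentialEdges n).card - S.card)

/-- The GF(2) sum `x u + x v` of the values of `x` on the two endpoints of an edge; this is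
the entry of `Mx` corresponding to that edge, for `M` the edge incidence matrix. -/
def edgeParity {n : ℕ} (x : Fin n → ZMod 2) : Sym2 (Fin n) → ZMod 2 :=
  Sym2.lift ⟨fun u v => x u + x v, fun _ _ => add_comm _ _⟩

/-- The total variation distance `(1/2) ∑_ω |p ω − q ω|` between two distributions on a
finite set. -/
noncomputable def tvDist {Ω : Type*} [Fintype Ω] (p q : Ω → ℝ) : ℝ :=
  (1 / 2) * ∑ ω, |p ω - q ω|

/-!
By Cauchy–Schwarz, `4 ‖p_M - U_r‖²` is at most `2 ^ r` times the collision probability of `p_M`,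
minus one. Writing this collision probability with signs and averaging over the graph turns it into
`𝔼 x y ∈ A, ∏_{uv} (1 + p (-1) ^ (z_u + z_v))` with `z = x + y`. Up to a factor coming from the
expansion of `log (1 + p)` to third order, the product is `exp (p (Z² - n) / 2)`, where
`Z = ∑_u (-1) ^ z_u`.

The square in the exponent is linearised by a standard Gaussian `g`, since
`exp (p Z² / 2) = 𝔼_g cosh (√p g Z)`. For fixed `t`, the average of `exp (t Z)` over `x, y ∈ A` is
`(cosh t) ^ n` times the noise stability of `A` at rate `τ = tanh t`. If `A` had noise stability
`1`, as the whole cube has, then integrating out `g` would leave only the error `O((n p)³ + p)`. In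
general the even moment version of Bonami's hypercontractive inequality bounds the noise stability
of a set of density `2 ^ (-c)` by `2 ^ (3 c τ)`. Since `cosh` is even, only the even levels of the
Fourier expansion contribute, and they deviate from `1` by `O((c τ)²)` as long as `c τ ≤ 1`;
integrating over `g` this becomes `O(c² p)`, which is `O(γ²)` for `c = γ √n + log₂ (2 / γ)`.
-/

open scoped BigOperators

lemma choose_two_mul_two_mul_le (m j : ℕ) :
    (2 * m).choose (2 * j) ≤ m.choose j * (2 * m - 1) ^ j := by
  induction j with
  | zero => simp
  | succ j ih =>
    obtain hmj | hjm := le_or_gt m j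
    · simp [Nat.choose_eq_zero_of_lt (show 2 * m < 2 * (j + 1) by lia)]
    obtain ⟨d, rfl⟩ : ∃ d, m = j + 1 + d := ⟨m - (j + 1), by lia⟩
    set m := j + 1 + d
    have step_odd : (2 * m).choose (2 * j + 1) * (2 * j + 1) =
        (2 * m).choose (2 * j) * (2 * d + 2) := by
      rw [Nat.choose_succ_right_eq, show 2 * m - 2 * j = 2 * d + 2 by lia]
    have step_even : (2 * m).choose (2 * (j + 1)) * (2 * j + 2) =
        (2 * m).choose (2 * j + 1) * (2 * d + 1) := by
      rw [show 2 * (j + 1) = 2 * j + 1 + 1 by ring, Nat.choose_succ_right_eq,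
        show 2 * m - (2 * j + 1) = 2 * d + 1 by lia]
    have step_half : m.choose (j + 1) * (j + 1) = m.choose j * (d + 1) := by
      rw [Nat.choose_succ_right_eq, show m - j = d + 1 by lia]
    have odd_le : 2 * d + 1 ≤ (2 * m - 1) * (2 * j + 1) :=
      (show 2 * d + 1 ≤ 2 * m - 1 by lia).trans (Nat.le_mul_of_pos_right _ (by lia))
    refine le_of_mul_le_mul_right ?_ (show 0 < (2 * j + 1) * (2 * j + 2) by positivity)
    calc (2 * m).choose (2 * (j + 1)) * ((2 * j + 1) * (2 * j + 2))
        = (2 * m).choose (2 * j) * ((2 * d + 2) * (2 * d + 1)) := by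
          linear_combination (2 * j + 1) * step_even + (2 * d + 1) * step_odd
      _ ≤ m.choose j * (2 * m - 1) ^ j * ((2 * d + 2) * (2 * d + 1)) := by gcongr
      _ = m.choose (j + 1) * (2 * m - 1) ^ j * (2 * j + 2) * (2 * d + 1) := by
          linear_combination 2 * (2 * m - 1) ^ j * (2 * d + 1) * -step_half
      _ ≤ m.choose (j + 1) * (2 * m - 1) ^ j * (2 * j + 2) * ((2 * m - 1) * (2 * j + 1)) := by
          gcongr
      _ = m.choose (j + 1) * (2 * m - 1) ^ (j + 1) * ((2 * j + 1) * (2 * j + 2)) := by ring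

lemma sum_range_two_mul_add_one_of_odd_eq_zero {M : Type*} [AddCommMonoid M] {f : ℕ → M}
    (hf : ∀ j, f (2 * j + 1) = 0) (m : ℕ) :
    ∑ k ∈ range (2 * m + 1), f k = ∑ j ∈ range (m + 1), f (2 * j) := by
  induction m with
  | zero => simp
  | succ m ih =>
    rw [show 2 * (m + 1) + 1 = 2 * m + 1 + 1 + 1 by ring, sum_range_succ, sum_range_succ, ih, hf,
      add_zero, sum_range_succ _ (m + 1), mul_add_one]

lemma add_pow_two_mul_add_sub_pow_two_mul {R : Type*} [CommRing R] (a b : R) (m : ℕ) :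
    (a + b) ^ (2 * m) + (a - b) ^ (2 * m) =
      2 * ∑ j ∈ range (m + 1), (b ^ 2) ^ j * (a ^ 2) ^ (m - j) * (2 * m).choose (2 * j) := by
  calc (a + b) ^ (2 * m) + (a - b) ^ (2 * m)
      = ∑ k ∈ range (2 * m + 1),
          (1 + (-1) ^ k) * (b ^ k * a ^ (2 * m - k) * (2 * m).choose k) := by
        rw [add_comm a, sub_eq_neg_add, add_pow, add_pow, ← sum_add_distrib]
        refine sum_congr rfl fun k _ ↦ ?_
        rw [neg_pow b]
        ring
    _ = ∑ j ∈ range (m + 1), (1 + (-1) ^ (2 * j)) *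
          (b ^ (2 * j) * a ^ (2 * m - 2 * j) * (2 * m).choose (2 * j)) :=
        sum_range_two_mul_add_one_of_odd_eq_zero (by simp [pow_succ, pow_mul]) m
    _ = _ := by
        rw [mul_sum]
        refine sum_congr rfl fun j _ ↦ ?_
        rw [pow_mul (-1), neg_one_sq, one_pow, one_add_one_eq_two, ← Nat.mul_sub, pow_mul, pow_mul]

lemma add_pow_add_sub_pow_le {m : ℕ} (hm : m ≠ 0) {ρ : ℝ} (hρ : ρ ^ 2 * (2 * m - 1) ≤ 1)
    (a b : ℝ) :
    ((a + ρ * b) ^ (2 * m) + (a - ρ * b) ^ (2 * m)) / 2 ≤ (a ^ 2 + b ^ 2) ^ m := by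
  rw [add_pow_two_mul_add_sub_pow_two_mul, mul_div_cancel_left₀ _ two_ne_zero, add_comm (a ^ 2),
    add_pow]
  refine sum_le_sum fun j _ ↦ ?_
  have hcast : ((2 * m - 1 : ℕ) : ℝ) = 2 * m - 1 := by
    rw [Nat.cast_sub (by lia)]
    push_cast
    rfl
  have coeff_le : (ρ ^ 2) ^ j * (2 * m).choose (2 * j) ≤ m.choose j := by
    calc (ρ ^ 2) ^ j * ((2 * m).choose (2 * j) : ℝ)
        ≤ (ρ ^ 2) ^ j * (m.choose j * ((2 * m - 1 : ℕ) : ℝ) ^ j) := by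
          gcongr
          exact_mod_cast choose_two_mul_two_mul_le m j
      _ = (ρ ^ 2 * (2 * m - 1)) ^ j * m.choose j := by
          rw [hcast, mul_pow]
          ring
      _ ≤ 1 * m.choose j := by
          gcongr
          refine pow_le_one₀ (mul_nonneg (sq_nonneg ρ) ?_) hρ
          rw [← hcast]
          positivity
      _ = m.choose j := one_mul _
  calc ((ρ * b) ^ 2) ^ j * (a ^ 2) ^ (m - j) * (2 * m).choose (2 * j)
      = (b ^ 2) ^ j * (a ^ 2) ^ (m - j) * ((ρ ^ 2) ^ j * (2 * m).choose (2 * j)) := by ring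
    _ ≤ (b ^ 2) ^ j * (a ^ 2) ^ (m - j) * m.choose j := by gcongr

section Minkowski

variable {α : Type*} {s : Finset α} {f g : α → ℝ}

lemma expect_add_rpow_rpow_inv_le {p : ℝ} (hp : 1 ≤ p) (hf : ∀ x ∈ s, 0 ≤ f x)
    (hg : ∀ x ∈ s, 0 ≤ g x) :
    (𝔼 x ∈ s, (f x + g x) ^ p) ^ p⁻¹ ≤ (𝔼 x ∈ s, f x ^ p) ^ p⁻¹ + (𝔼 x ∈ s, g x ^ p) ^ p⁻¹ := by
  have sum_nonneg' {h : α → ℝ} (hh : ∀ x ∈ s, 0 ≤ h x) : 0 ≤ ∑ x ∈ s, h x ^ p :=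
    sum_nonneg fun x hx ↦ Real.rpow_nonneg (hh x hx) p
  simp only [expect_eq_sum_div_card]
  rw [Real.div_rpow (sum_nonneg' fun x hx ↦ add_nonneg (hf x hx) (hg x hx)) (by positivity),
    Real.div_rpow (sum_nonneg' hf) (by positivity), Real.div_rpow (sum_nonneg' hg) (by positivity),
    ← add_div]
  gcongr
  simpa only [one_div] using Real.Lp_add_le_of_nonneg s hp hf hg

lemma expect_add_pow_le {m : ℕ} (hm : m ≠ 0) (hf : ∀ x ∈ s, 0 ≤ f x) (hg : ∀ x ∈ s, 0 ≤ g x)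
    {P Q : ℝ} (hP : 0 ≤ P) (hQ : 0 ≤ Q) (hfP : 𝔼 x ∈ s, f x ^ m ≤ P ^ m)
    (hgQ : 𝔼 x ∈ s, g x ^ m ≤ Q ^ m) :
    𝔼 x ∈ s, (f x + g x) ^ m ≤ (P + Q) ^ m := by
  have hm_pos : (0 : ℝ) < m := by positivity
  have expect_nonneg' {h : α → ℝ} (hh : ∀ x ∈ s, 0 ≤ h x) : 0 ≤ 𝔼 x ∈ s, h x ^ m :=
    expect_nonneg fun x hx ↦ pow_nonneg (hh x hx) m
  have minkowski := expect_add_rpow_rpow_inv_le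
    (by exact_mod_cast Nat.one_le_iff_ne_zero.2 hm : (1 : ℝ) ≤ m) hf hg
  simp only [Real.rpow_natCast] at minkowski
  rw [← Real.rpow_natCast, ← Real.rpow_inv_le_iff_of_pos
    (expect_nonneg' fun x hx ↦ add_nonneg (hf x hx) (hg x hx)) (add_nonneg hP hQ) hm_pos]
  refine minkowski.trans (add_le_add ?_ ?_)
  · rwa [Real.rpow_inv_le_iff_of_pos (expect_nonneg' hf) hP hm_pos, Real.rpow_natCast]
  · rwa [Real.rpow_inv_le_iff_of_pos (expect_nonneg' hg) hQ hm_pos, Real.rpow_natCast]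

end Minkowski

section Walsh

/-- The sign `(-1) ^ a` of a bit `a`, as the nontrivial additive character of `ZMod 2`. -/
noncomputable def paritySign : AddChar (ZMod 2) ℝ :=
  AddChar.zmodChar 2 (ζ := -1) (by norm_num)

lemma paritySign_one : paritySign 1 = -1 := by
  simp [paritySign, AddChar.zmodChar_apply, ZMod.val_one]

lemma paritySign_eq_one_or_neg_one (a : ZMod 2) : paritySign a = 1 ∨ paritySign a = -1 :=
  neg_one_pow_eq_or ℝ a.val

lemma paritySign_sq (a : ZMod 2) : paritySign a ^ 2 = 1 := by
  rcases paritySign_eq_one_or_neg_one a with h | h <;> simp [h]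

lemma one_add_paritySign_add (a b : ZMod 2) :
    1 + paritySign (a + b) = if a = b then 2 else 0 := by
  split_ifs with h
  · simp [h, CharTwo.add_self_eq_zero, one_add_one_eq_two]
  · have add_eq_one : a + b = 1 := by
      revert h
      decide +revert
    simp [add_eq_one, paritySign_one]

/-- The Walsh character `χ_v(x) = ∏_{i ∈ v} (-1) ^ x_i` of the Boolean cube. -/
noncomputable def walsh {ι : Type*} (v : Finset ι) (x : ι → ZMod 2) : ℝ :=
  ∏ i ∈ v, paritySign (x i)

/-- The multilinear polynomial `∑_{v ⊆ s} a_v χ_v` in the signs of the coordinates in `s`. -/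
noncomputable def walshSum {ι : Type*} (s : Finset ι) (a : Finset ι → ℝ) (x : ι → ZMod 2) : ℝ :=
  ∑ v ∈ s.powerset, a v * walsh v x

variable {ι : Type*}

lemma walsh_add (v : Finset ι) (x y : ι → ZMod 2) : walsh v (x + y) = walsh v x * walsh v y := by
  simp [walsh, AddChar.map_add_eq_mul, prod_mul_distrib]

variable [DecidableEq ι] {i : ι} {s : Finset ι}

lemma walshSum_insert (hi : i ∉ s) (a : Finset ι → ℝ) (x : ι → ZMod 2) :
    walshSum (insert i s) a x =
      walshSum s a x + paritySign (x i) * walshSum s (fun v ↦ a (insert i v)) x := by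
  simp only [walshSum, sum_powerset_insert hi, mul_sum]
  congr 1
  refine sum_congr rfl fun v hv ↦ ?_
  rw [walsh, prod_insert fun hiv ↦ hi (mem_powerset.1 hv hiv), walsh]
  ring

lemma walshSum_add_single_of_notMem (hi : i ∉ s) (a : Finset ι → ℝ) (x : ι → ZMod 2) (b : ZMod 2) :
    walshSum s a (x + Pi.single i b) = walshSum s a x := by
  refine sum_congr rfl fun v hv ↦ congrArg (a v * ·) (prod_congr rfl fun j hj ↦ ?_)
  have hji : j ≠ i := fun h ↦ hi (mem_powerset.1 hv (h ▸ hj))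
  simp [hji]

variable [Fintype ι]

lemma expect_eq_expect_average_translate {G : Type*} [AddGroup G] [Fintype G] (f : G → ℝ) (b : G) :
    𝔼 x, f x = 𝔼 x, (f x + f (x + b)) / 2 := by
  have translate : 𝔼 x, f (x + b) = 𝔼 x, f x :=
    Fintype.expect_equiv (Equiv.addRight b) _ _ (by simp)
  rw [← expect_div, expect_add_distrib, translate, add_self_div_two]

theorem expect_walshSum_pow_le {m : ℕ} (hm : m ≠ 0) {ρ : ℝ} (hρ : ρ ^ 2 * (2 * m - 1) ≤ 1)
    (s : Finset ι) (a : Finset ι → ℝ) :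
    𝔼 x, walshSum s (fun v ↦ ρ ^ #v * a v) x ^ (2 * m) ≤ (∑ v ∈ s.powerset, a v ^ 2) ^ m := by
  induction s using Finset.induction_on generalizing a with
  | empty => simp [walshSum, walsh, pow_mul]
  | insert i s hi ih =>
    set g := walshSum s fun v ↦ ρ ^ #v * a v
    set h := walshSum s fun v ↦ ρ ^ #v * a (insert i v)
    have split (x : ι → ZMod 2) : walshSum (insert i s) (fun v ↦ ρ ^ #v * a v) x =
        g x + ρ * (paritySign (x i) * h x) := by
      have pull_ρ : walshSum s (fun v ↦ ρ ^ #(insert i v) * a (insert i v)) x = ρ * h x := by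
        simp only [h, walshSum, mul_sum]
        refine sum_congr rfl fun v hv ↦ ?_
        rw [card_insert_of_notMem fun hiv ↦ hi (mem_powerset.1 hv hiv)]
        ring
      rw [walshSum_insert hi, pull_ρ]
      ring
    have flip (x : ι → ZMod 2) :
        walshSum (insert i s) (fun v ↦ ρ ^ #v * a v) (x + Pi.single i 1) =
          g x - ρ * (paritySign (x i) * h x) := by
      have hg : g (x + Pi.single i 1) = g x := walshSum_add_single_of_notMem hi _ x 1
      have hh : h (x + Pi.single i 1) = h x := walshSum_add_single_of_notMem hi _ x 1
      rw [split, hg, hh, Pi.add_apply, Pi.single_eq_same, AddChar.map_add_eq_mul, paritySign_one]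
      ring
    calc 𝔼 x, walshSum (insert i s) (fun v ↦ ρ ^ #v * a v) x ^ (2 * m)
        = 𝔼 x, ((g x + ρ * (paritySign (x i) * h x)) ^ (2 * m) +
            (g x - ρ * (paritySign (x i) * h x)) ^ (2 * m)) / 2 := by
          rw [expect_eq_expect_average_translate _ (Pi.single i 1)]
          simp only [flip, split]
      _ ≤ 𝔼 x, (g x ^ 2 + h x ^ 2) ^ m := expect_le_expect fun x _ ↦ by
          simpa only [mul_pow (paritySign _), paritySign_sq, one_mul] using
            add_pow_add_sub_pow_le hm hρ (g x) (paritySign (x i) * h x)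
      _ ≤ (∑ v ∈ s.powerset, a v ^ 2 + ∑ v ∈ s.powerset, a (insert i v) ^ 2) ^ m := by
          refine expect_add_pow_le hm (fun _ _ ↦ sq_nonneg _) (fun _ _ ↦ sq_nonneg _)
            (sum_nonneg fun _ _ ↦ sq_nonneg _) (sum_nonneg fun _ _ ↦ sq_nonneg _) ?_ ?_
          · simpa only [← pow_mul] using ih a
          · simpa only [← pow_mul] using ih fun v ↦ a (insert i v)
      _ = (∑ v ∈ (insert i s).powerset, a v ^ 2) ^ m := by rw [sum_powerset_insert hi]

end Walsh

section NoiseStability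

lemma nonempty_of_rpow_le_card {X : Type*} {s : Finset X} {d : ℝ} (hs : (2 : ℝ) ^ d ≤ #s) :
    s.Nonempty := by
  rw [← card_pos, ← Nat.cast_pos (α := ℝ)]
  exact lt_of_lt_of_le (by positivity) hs

lemma expect_pow_le_expect_pow_of_even {α : Type*} {s : Finset α} (hs : s.Nonempty) (f : α → ℝ)
    {k : ℕ} (hk : Even k) : (𝔼 x ∈ s, f x) ^ k ≤ 𝔼 x ∈ s, f x ^ k := by
  simpa only [expect_eq_sum_div_card, div_eq_inv_mul, mul_sum] using
    Real.pow_arith_mean_le_arith_mean_pow_of_even s (fun _ ↦ (#s : ℝ)⁻¹) f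
      (fun _ _ ↦ by positivity) (by simp [hs.ne_empty]) hk

variable {ι : Type*}

/-- The Walsh–Fourier coefficient at `v` of the uniform distribution on `A`. -/
noncomputable def walshCoeff (A : Finset (ι → ZMod 2)) (v : Finset ι) : ℝ :=
  𝔼 x ∈ A, walsh v x

/-- The noise stability `∑_v τ^|v| Â(v)²` of the uniform distribution on `A`. -/
noncomputable def noiseStability [Fintype ι] (A : Finset (ι → ZMod 2)) (τ : ℝ) : ℝ :=
  ∑ v, τ ^ #v * walshCoeff A v ^ 2

variable {A : Finset (ι → ZMod 2)} {c τ : ℝ}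

lemma walshCoeff_empty (hA : A.Nonempty) : walshCoeff A ∅ = 1 := by
  simp [walshCoeff, walsh, expect_const hA]

lemma walshCoeff_sq (A : Finset (ι → ZMod 2)) (v : Finset ι) :
    walshCoeff A v ^ 2 = 𝔼 x ∈ A, 𝔼 y ∈ A, walsh v (x + y) := by
  simp only [walsh_add, sq, walshCoeff, expect_mul_expect]

variable [Fintype ι]

lemma one_le_noiseStability (hA : A.Nonempty) (hτ : 0 ≤ τ) : 1 ≤ noiseStability A τ :=
  calc 1 = τ ^ #(∅ : Finset ι) * walshCoeff A ∅ ^ 2 := by simp [walshCoeff_empty hA]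
    _ ≤ noiseStability A τ :=
      single_le_sum (f := fun v ↦ τ ^ #v * walshCoeff A v ^ 2) (fun _ _ ↦ by positivity)
        (mem_univ ∅)

lemma expect_expect_prod_eq_noiseStability (A : Finset (ι → ZMod 2)) (τ : ℝ) :
    𝔼 x ∈ A, 𝔼 y ∈ A, ∏ i, (1 + τ * paritySign ((x + y) i)) = noiseStability A τ := by
  have expand (z : ι → ZMod 2) :
      ∏ i, (1 + τ * paritySign (z i)) = ∑ v : Finset ι, τ ^ #v * walsh v z := by
    simp only [prod_one_add, powerset_univ, prod_mul_distrib, prod_const, walsh]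
  simp only [expand, noiseStability, walshCoeff_sq, mul_expect, expect_sum_comm]

lemma expect_walshSum_walshCoeff (A : Finset (ι → ZMod 2)) (τ : ℝ) :
    𝔼 x ∈ A, walshSum univ (fun v ↦ τ ^ #v * walshCoeff A v) x = noiseStability A τ := by
  simp only [walshSum, noiseStability, powerset_univ, expect_sum_comm, ← mul_expect, sq,
    mul_assoc, walshCoeff]

lemma expect_le_rpow_mul_expect [DecidableEq ι] {f : (ι → ZMod 2) → ℝ} (hf : ∀ x, 0 ≤ f x)
    (hA : (2 : ℝ) ^ ((Fintype.card ι : ℝ) - c) ≤ #A) : 𝔼 x ∈ A, f x ≤ 2 ^ c * 𝔼 x, f x := by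
  rw [expect_eq_sum_div_card, expect_eq_sum_div_card]
  calc (∑ x ∈ A, f x) / #A
      ≤ (∑ x, f x) / 2 ^ ((Fintype.card ι : ℝ) - c) := by
        gcongr
        · exact sum_nonneg fun x _ ↦ hf x
        · exact fun x _ _ ↦ hf x
        · exact subset_univ A
    _ = 2 ^ c * ((∑ x, f x) / #(univ : Finset (ι → ZMod 2))) := by
        rw [Real.rpow_sub two_pos, Real.rpow_natCast, card_univ, Fintype.card_fun, ZMod.card]
        push_cast
        field_simp

lemma noiseStability_pow_le (hA : (2 : ℝ) ^ ((Fintype.card ι : ℝ) - c) ≤ #A) (hτ : 0 ≤ τ) {m : ℕ}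
    (hm : m ≠ 0) (hτm : τ * (2 * m - 1) ≤ 1) : noiseStability A τ ^ m ≤ 2 ^ c := by
  classical
  have hA_ne := nonempty_of_rpow_le_card hA
  have stability_pos : 0 < noiseStability A τ := one_pos.trans_le (one_le_noiseStability hA_ne hτ)
  have hypercontractive : 𝔼 x, walshSum univ (fun v ↦ τ ^ #v * walshCoeff A v) x ^ (2 * m) ≤
      noiseStability A τ ^ m := by
    have h := expect_walshSum_pow_le hm (ρ := √τ) (by rwa [Real.sq_sqrt hτ]) univ
      fun v ↦ √τ ^ #v * walshCoeff A v
    simpa only [← mul_assoc, ← mul_pow, Real.mul_self_sqrt hτ, mul_pow _ (walshCoeff A _),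
      pow_right_comm _ _ 2, Real.sq_sqrt hτ, powerset_univ, noiseStability] using h
  refine le_of_mul_le_mul_right ?_ (pow_pos stability_pos m)
  calc noiseStability A τ ^ m * noiseStability A τ ^ m
      = (𝔼 x ∈ A, walshSum univ (fun v ↦ τ ^ #v * walshCoeff A v) x) ^ (2 * m) := by
        rw [expect_walshSum_walshCoeff]
        ring
    _ ≤ 𝔼 x ∈ A, walshSum univ (fun v ↦ τ ^ #v * walshCoeff A v) x ^ (2 * m) :=
        expect_pow_le_expect_pow_of_even hA_ne _ (even_two_mul m)
    _ ≤ 2 ^ c * 𝔼 x, walshSum univ (fun v ↦ τ ^ #v * walshCoeff A v) x ^ (2 * m) :=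
        expect_le_rpow_mul_expect (fun _ ↦ (even_two_mul m).pow_nonneg _) hA
    _ ≤ 2 ^ c * noiseStability A τ ^ m := by gcongr

lemma noiseStability_le (hA : (2 : ℝ) ^ ((Fintype.card ι : ℝ) - c) ≤ #A) (hc : 0 ≤ c)
    (hτ : 0 < τ) (hτ_le : τ ≤ 1) : noiseStability A τ ≤ 2 ^ (3 * (c * τ)) := by
  -- `m` is the largest exponent that hypercontractivity allows at noise rate `τ`.
  set m := ⌊(τ⁻¹ + 1) / 2⌋₊
  have one_le_inv : 1 ≤ τ⁻¹ := (one_le_inv₀ hτ).2 hτ_le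
  have hm : 1 ≤ m := Nat.one_le_floor_iff _ |>.2 (by linarith)
  have hm_real : (1 : ℝ) ≤ m := by exact_mod_cast hm
  have m_le : (m : ℝ) ≤ (τ⁻¹ + 1) / 2 := Nat.floor_le (by positivity)
  have lt_m : (τ⁻¹ + 1) / 2 < m + 1 := Nat.lt_floor_add_one _
  have hτm : τ * (2 * m - 1) ≤ 1 := (le_inv_mul_iff₀ hτ).1 (by linarith)
  have one_le_mul : 1 ≤ τ * (3 * m) := (inv_mul_le_iff₀ hτ).1 (by linarith)
  refine le_of_pow_le_pow_left₀ (by lia) (by positivity)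
    ((noiseStability_pow_le hA hτ.le (by lia) hτm).trans ?_)
  rw [← Real.rpow_natCast, ← Real.rpow_mul two_pos.le]
  refine Real.rpow_le_rpow_of_exponent_le one_le_two ?_
  calc c ≤ c * (τ * (3 * m)) := le_mul_of_one_le_right hc one_le_mul
    _ = 3 * (c * τ) * m := by ring

lemma noiseStability_neg_le (A : Finset (ι → ZMod 2)) (hτ : 0 ≤ τ) :
    noiseStability A (-τ) ≤ noiseStability A τ := by
  refine sum_le_sum fun v _ ↦ mul_le_mul_of_nonneg_right ?_ (sq_nonneg _)
  simpa only [abs_pow, abs_neg, abs_of_nonneg hτ] using le_abs_self ((-τ) ^ #v)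

lemma pow_add_neg_pow_div_two_le {σ : ℝ} (hτ : 0 ≤ τ) (hσ : 0 < σ) (hτσ : τ ≤ σ) {k : ℕ}
    (hk : k ≠ 0) : (τ ^ k + (-τ) ^ k) / 2 ≤ (τ / σ) ^ 2 * σ ^ k := by
  obtain even | odd := k.even_or_odd
  · have two_le : 2 ≤ k := by
      obtain ⟨j, rfl⟩ := even
      lia
    calc (τ ^ k + (-τ) ^ k) / 2 = (τ / σ) ^ k * σ ^ k := by
          rw [even.neg_pow, add_self_div_two, ← mul_pow, div_mul_cancel₀ _ hσ.ne']
      _ ≤ (τ / σ) ^ 2 * σ ^ k := by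
          gcongr ?_ * _
          exact pow_le_pow_of_le_one (by positivity) ((div_le_one hσ).2 hτσ) two_le
  · rw [odd.neg_pow, add_neg_cancel, zero_div]
    positivity

lemma noiseStability_add_neg_div_two_le {σ : ℝ} (hA : A.Nonempty) (hτ : 0 ≤ τ) (hσ : 0 < σ)
    (hτσ : τ ≤ σ) : (noiseStability A τ + noiseStability A (-τ)) / 2 ≤
      1 + (τ / σ) ^ 2 * noiseStability A σ := by
  classical
  have term_le (v : Finset ι) :
      (τ ^ #v * walshCoeff A v ^ 2 + (-τ) ^ #v * walshCoeff A v ^ 2) / 2 ≤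
        (if v = ∅ then 1 else 0) + (τ / σ) ^ 2 * (σ ^ #v * walshCoeff A v ^ 2) := by
    rw [← add_mul, mul_div_right_comm, ← mul_assoc]
    split_ifs with hv
    · simp only [hv, walshCoeff_empty hA, card_empty, pow_zero, one_pow, mul_one,
        add_self_div_two, le_add_iff_nonneg_right]
      positivity
    · rw [zero_add]
      gcongr
      exact pow_add_neg_pow_div_two_le hτ hσ hτσ (by simpa using hv)
  calc (noiseStability A τ + noiseStability A (-τ)) / 2
      ≤ ∑ v : Finset ι, ((if v = ∅ then 1 else 0) +
          (τ / σ) ^ 2 * (σ ^ #v * walshCoeff A v ^ 2)) := by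
        rw [noiseStability, noiseStability, ← sum_add_distrib, sum_div]
        exact sum_le_sum fun v _ ↦ term_le v
    _ = 1 + (τ / σ) ^ 2 * noiseStability A σ := by
        simp [sum_add_distrib, ← mul_sum, noiseStability]

lemma noiseStability_add_neg_div_two_le_of_rpow_le_card
    (hA : (2 : ℝ) ^ ((Fintype.card ι : ℝ) - c) ≤ #A) (hc : 1 ≤ c) (hτ : 0 ≤ τ) (hτ_le : τ ≤ 1) :
    (noiseStability A τ + noiseStability A (-τ)) / 2 ≤
      1 + 8 * (c * τ) ^ 2 * 2 ^ (3 * (c * τ)) := by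
  have c_pos : 0 < c := by linarith
  have one_le_rpow : (1 : ℝ) ≤ 2 ^ (3 * (c * τ)) := Real.one_le_rpow one_le_two (by positivity)
  obtain small | large := le_or_gt (c * τ) 1
  · have stability_le : noiseStability A c⁻¹ ≤ 8 := by
      convert noiseStability_le hA c_pos.le (inv_pos.2 c_pos) (inv_le_one_of_one_le₀ hc) using 1
      rw [mul_inv_cancel₀ c_pos.ne']
      norm_num
    calc (noiseStability A τ + noiseStability A (-τ)) / 2
        ≤ 1 + (τ / c⁻¹) ^ 2 * noiseStability A c⁻¹ :=
          noiseStability_add_neg_div_two_le (nonempty_of_rpow_le_card hA) hτ (inv_pos.2 c_pos)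
            ((le_inv_mul_iff₀ c_pos).2 small |>.trans_eq (mul_one _))
      _ ≤ 1 + (c * τ) ^ 2 * 8 * 1 := by
          rw [div_inv_eq_mul, mul_comm τ, mul_one]
          gcongr
      _ ≤ 1 + 8 * (c * τ) ^ 2 * 2 ^ (3 * (c * τ)) := by
          rw [mul_comm _ (8 : ℝ)]
          gcongr
  · have τ_pos : 0 < τ := pos_of_mul_pos_right (one_pos.trans large) c_pos.le
    calc (noiseStability A τ + noiseStability A (-τ)) / 2
        ≤ noiseStability A τ := by linarith [noiseStability_neg_le A hτ]
      _ ≤ 1 * 2 ^ (3 * (c * τ)) := by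
          rw [one_mul]
          exact noiseStability_le hA c_pos.le τ_pos hτ_le
      _ ≤ 8 * (c * τ) ^ 2 * 2 ^ (3 * (c * τ)) := by
          gcongr
          nlinarith
      _ ≤ 1 + 8 * (c * τ) ^ 2 * 2 ^ (3 * (c * τ)) := by simp

end NoiseStability

section SignSum

lemma tanh_nonneg {t : ℝ} (ht : 0 ≤ t) : 0 ≤ Real.tanh t := by
  rw [Real.tanh_eq_sinh_div_cosh]
  exact div_nonneg (Real.sinh_nonneg_iff.2 ht) (Real.cosh_pos t).le

lemma tanh_le_two_mul {t : ℝ} (ht : 0 ≤ t) : Real.tanh t ≤ 2 * t := by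
  rw [Real.tanh_eq_sinh_div_cosh, div_le_iff₀ (Real.cosh_pos t), Real.sinh_eq, Real.cosh_eq]
  have exp_neg_eq : Real.exp (-t) = Real.exp t * Real.exp (-(2 * t)) := by
    rw [← Real.exp_add]
    ring_nf
  have one_sub_le : 1 - Real.exp (-(2 * t)) ≤ 2 * t := by
    linarith [Real.add_one_le_exp (-(2 * t))]
  calc (Real.exp t - Real.exp (-t)) / 2 = Real.exp t * (1 - Real.exp (-(2 * t))) / 2 := by
        rw [exp_neg_eq]
        ring
    _ ≤ (Real.exp t + Real.exp (-t)) * (2 * t) / 2 := by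
        gcongr
        · simpa using ht
        · exact le_add_of_nonneg_right (Real.exp_pos _).le
    _ = 2 * t * ((Real.exp t + Real.exp (-t)) / 2) := by ring

lemma exp_mul_paritySign (t : ℝ) (a : ZMod 2) :
    Real.exp (t * paritySign a) = Real.cosh t * (1 + Real.tanh t * paritySign a) := by
  have h : Real.cosh t * (1 + Real.tanh t * paritySign a) =
      Real.cosh t + Real.sinh t * paritySign a := by
    rw [Real.tanh_eq_sinh_div_cosh]
    field_simp [(Real.cosh_pos t).ne']
  rw [h]
  rcases paritySign_eq_one_or_neg_one a with ha | ha
  · rw [ha, mul_one, mul_one, Real.cosh_add_sinh]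
  · rw [ha, mul_neg_one, mul_neg_one, ← sub_eq_add_neg, Real.cosh_sub_sinh]

variable {ι : Type*} [Fintype ι] {A : Finset (ι → ZMod 2)} {c : ℝ}

/-- The sum of the signs of the coordinates, i.e. `card ι` minus twice the Hamming weight. -/
noncomputable def signSum (z : ι → ZMod 2) : ℝ :=
  ∑ i, paritySign (z i)

lemma exp_mul_signSum (t : ℝ) (z : ι → ZMod 2) :
    Real.exp (t * signSum z) =
      Real.cosh t ^ Fintype.card ι * ∏ i, (1 + Real.tanh t * paritySign (z i)) := by
  rw [signSum, mul_sum, Real.exp_sum]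
  simp only [exp_mul_paritySign, prod_mul_distrib, prod_const, card_univ]

lemma expect_expect_exp_mul_signSum (A : Finset (ι → ZMod 2)) (t : ℝ) :
    𝔼 x ∈ A, 𝔼 y ∈ A, Real.exp (t * signSum (x + y)) =
      Real.cosh t ^ Fintype.card ι * noiseStability A (Real.tanh t) := by
  simp only [exp_mul_signSum, ← mul_expect, expect_expect_prod_eq_noiseStability]

lemma expect_expect_cosh_mul_signSum (A : Finset (ι → ZMod 2)) (t : ℝ) :
    𝔼 x ∈ A, 𝔼 y ∈ A, Real.cosh (t * signSum (x + y)) = Real.cosh t ^ Fintype.card ι *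
      ((noiseStability A (Real.tanh t) + noiseStability A (-Real.tanh t)) / 2) := by
  simp only [Real.cosh_eq (_ * signSum _), ← neg_mul, ← expect_div, expect_add_distrib,
    expect_expect_exp_mul_signSum, Real.cosh_neg, Real.tanh_neg]
  ring

lemma expect_expect_cosh_mul_signSum_le (hA : (2 : ℝ) ^ ((Fintype.card ι : ℝ) - c) ≤ #A)
    (hc : 1 ≤ c) (t : ℝ) :
    𝔼 x ∈ A, 𝔼 y ∈ A, Real.cosh (t * signSum (x + y)) ≤
      Real.exp (Fintype.card ι * t ^ 2 / 2) *
        (1 + 32 * (c * t) ^ 2 * Real.exp (6 * (c * |t|))) := by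
  wlog ht : 0 ≤ t generalizing t with of_nonneg
  · simpa using of_nonneg (-t) (by linarith)
  have tanh_nonneg := tanh_nonneg ht
  have tanh_le := tanh_le_two_mul ht
  have cosh_pow_le : Real.cosh t ^ Fintype.card ι ≤ Real.exp (Fintype.card ι * t ^ 2 / 2) := by
    rw [mul_div_assoc, Real.exp_nat_mul]
    exact pow_le_pow_left₀ (Real.cosh_pos t).le (Real.cosh_le_exp_half_sq t) _
  have rpow_le : (2 : ℝ) ^ (3 * (c * Real.tanh t)) ≤ Real.exp (6 * (c * t)) := by
    rw [Real.rpow_def_of_pos two_pos, Real.exp_le_exp]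
    calc Real.log 2 * (3 * (c * Real.tanh t)) ≤ 1 * (3 * (c * (2 * t))) := by
          gcongr
          linarith [Real.log_two_lt_d9]
      _ = 6 * (c * t) := by ring
  rw [expect_expect_cosh_mul_signSum, abs_of_nonneg ht]
  calc Real.cosh t ^ Fintype.card ι *
        ((noiseStability A (Real.tanh t) + noiseStability A (-Real.tanh t)) / 2)
      ≤ Real.cosh t ^ Fintype.card ι *
          (1 + 8 * (c * Real.tanh t) ^ 2 * 2 ^ (3 * (c * Real.tanh t))) := by
        have := (Real.cosh_pos t).le
        gcongr
        exact noiseStability_add_neg_div_two_le_of_rpow_le_card hA hc tanh_nonneg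
          (Real.tanh_lt_one t).le
    _ ≤ Real.exp (Fintype.card ι * t ^ 2 / 2) *
          (1 + 8 * (c * (2 * t)) ^ 2 * Real.exp (6 * (c * t))) := by gcongr
    _ = Real.exp (Fintype.card ι * t ^ 2 / 2) *
          (1 + 32 * (c * t) ^ 2 * Real.exp (6 * (c * t))) := by ring

end SignSum

section Gaussian

open MeasureTheory ProbabilityTheory

lemma integrable_cosh_mul_gaussianReal (s : ℝ) :
    Integrable (fun g ↦ Real.cosh (s * g)) (gaussianReal 0 1) := by
  simp only [Real.cosh_eq, ← neg_mul]
  exact ((integrable_exp_mul_gaussianReal s).add (integrable_exp_mul_gaussianReal (-s))).div_const 2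

lemma integral_cosh_mul_gaussianReal (s : ℝ) :
    ∫ g, Real.cosh (s * g) ∂gaussianReal 0 1 = Real.exp (s ^ 2 / 2) := by
  have integral_exp (t : ℝ) : ∫ g, Real.exp (t * g) ∂gaussianReal 0 1 = Real.exp (t ^ 2 / 2) := by
    simpa [mgf] using congrFun (mgf_id_gaussianReal (μ := 0) (v := 1)) t
  simp only [Real.cosh_eq, ← neg_mul]
  rw [integral_div, integral_add (integrable_exp_mul_gaussianReal s)
    (integrable_exp_mul_gaussianReal (-s)), integral_exp, integral_exp, neg_sq, add_self_div_two]

lemma gaussianPDFReal_mul_exp_mul_sq (b g : ℝ) :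
    gaussianPDFReal 0 1 g * Real.exp (b * g ^ 2) =
      (√(2 * Real.pi))⁻¹ * Real.exp (-(1 / 2 - b) * g ^ 2) := by
  rw [gaussianPDFReal, mul_assoc, ← Real.exp_add]
  simp only [NNReal.coe_one, mul_one, sub_zero]
  ring_nf

lemma integrable_exp_mul_sq_gaussianReal {b : ℝ} (hb : b < 1 / 2) :
    Integrable (fun g ↦ Real.exp (b * g ^ 2)) (gaussianReal 0 1) := by
  rw [gaussianReal_of_var_ne_zero 0 one_ne_zero, integrable_withDensity_iff_integrable_smul'
    (measurable_gaussianPDF 0 1) (ae_of_all _ fun _ ↦ gaussianPDF_lt_top)]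
  simp only [toReal_gaussianPDF, smul_eq_mul, gaussianPDFReal_mul_exp_mul_sq]
  exact (integrable_exp_neg_mul_sq (by linarith)).const_mul _

lemma integral_exp_mul_sq_gaussianReal {b : ℝ} (hb : b < 1 / 2) :
    ∫ g, Real.exp (b * g ^ 2) ∂gaussianReal 0 1 = (√(1 - 2 * b))⁻¹ := by
  simp only [integral_gaussianReal_eq_integral_smul one_ne_zero, smul_eq_mul,
    gaussianPDFReal_mul_exp_mul_sq]
  rw [integral_const_mul, integral_gaussian, ← Real.sqrt_inv, ← Real.sqrt_inv,
    ← Real.sqrt_mul (by positivity)]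
  congr 1
  have : 1 - 2 * b ≠ 0 := by linarith
  have : 1 / 2 - b ≠ 0 := by linarith
  field_simp

variable {ι : Type*} [Fintype ι] {A : Finset (ι → ZMod 2)} {c p : ℝ}

lemma expect_expect_exp_sq_signSum_eq_integral (A : Finset (ι → ZMod 2)) (hp : 0 ≤ p) :
    𝔼 x ∈ A, 𝔼 y ∈ A, Real.exp (p * signSum (x + y) ^ 2 / 2) =
      ∫ g, 𝔼 x ∈ A, 𝔼 y ∈ A, Real.cosh (√p * signSum (x + y) * g) ∂gaussianReal 0 1 := by
  have linearise (z : ι → ZMod 2) : Real.exp (p * signSum z ^ 2 / 2) =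
      ∫ g, Real.cosh (√p * signSum z * g) ∂gaussianReal 0 1 := by
    rw [integral_cosh_mul_gaussianReal, mul_pow, Real.sq_sqrt hp]
  simp only [linearise, expect_eq_sum_div_card]
  rw [integral_div, integral_finsetSum]
  · simp only [integral_div, integral_finsetSum _ fun _ _ ↦ integrable_cosh_mul_gaussianReal _]
  · exact fun x _ ↦
      (integrable_finsetSum _ fun _ _ ↦ integrable_cosh_mul_gaussianReal _).div_const _

lemma sq_mul_exp_le {s : ℝ} (hs : s ≤ 1) (g : ℝ) :
    (s * g) ^ 2 * Real.exp (6 * (s * |g|)) ≤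
      8 * Real.exp 72 * s ^ 2 * Real.exp (1 / 4 * g ^ 2) := by
  have linear_le : 6 * (s * |g|) ≤ 72 + g ^ 2 / 8 := by
    have : s * |g| ≤ 1 * |g| := by gcongr
    nlinarith [sq_nonneg (|g| - 24), sq_abs g]
  have sq_le : g ^ 2 ≤ 8 * Real.exp (g ^ 2 / 8) := by linarith [Real.add_one_le_exp (g ^ 2 / 8)]
  calc (s * g) ^ 2 * Real.exp (6 * (s * |g|))
      ≤ s ^ 2 * (8 * Real.exp (g ^ 2 / 8)) * Real.exp (72 + g ^ 2 / 8) := by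
        rw [mul_pow]
        gcongr
    _ = 8 * Real.exp 72 * s ^ 2 * (Real.exp (g ^ 2 / 8) * Real.exp (g ^ 2 / 8)) := by
        rw [Real.exp_add]
        ring
    _ = 8 * Real.exp 72 * s ^ 2 * Real.exp (1 / 4 * g ^ 2) := by
        rw [← Real.exp_add]
        ring_nf

lemma expect_expect_cosh_sqrt_mul_signSum_le (hA : (2 : ℝ) ^ ((Fintype.card ι : ℝ) - c) ≤ #A)
    (hc : 1 ≤ c) (hp : 0 ≤ p) (hcp : c ^ 2 * p ≤ 1) (g : ℝ) :
    𝔼 x ∈ A, 𝔼 y ∈ A, Real.cosh (√p * signSum (x + y) * g) ≤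
      Real.exp (Fintype.card ι * p / 2 * g ^ 2) +
        256 * Real.exp 72 * (c ^ 2 * p) *
          Real.exp ((Fintype.card ι * p / 2 + 1 / 4) * g ^ 2) := by
  have hs_sq : (c * √p) ^ 2 = c ^ 2 * p := by rw [mul_pow, Real.sq_sqrt hp]
  have hs_le : c * √p ≤ 1 := (sq_le_one_iff₀ (by positivity)).1 (hs_sq.trans_le hcp)
  have tail_le := sq_mul_exp_le hs_le g
  calc 𝔼 x ∈ A, 𝔼 y ∈ A, Real.cosh (√p * signSum (x + y) * g)
      = 𝔼 x ∈ A, 𝔼 y ∈ A, Real.cosh (√p * g * signSum (x + y)) := by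
        simp only [mul_right_comm _ g]
    _ ≤ Real.exp (Fintype.card ι * (√p * g) ^ 2 / 2) *
          (1 + 32 * (c * (√p * g)) ^ 2 * Real.exp (6 * (c * |√p * g|))) :=
        expect_expect_cosh_mul_signSum_le hA hc (√p * g)
    _ = Real.exp (Fintype.card ι * p / 2 * g ^ 2) *
          (1 + 32 * ((c * √p * g) ^ 2 * Real.exp (6 * (c * √p * |g|)))) := by
        rw [mul_pow √p, Real.sq_sqrt hp, abs_mul, abs_of_nonneg (Real.sqrt_nonneg p)]
        ring_nf
    _ ≤ Real.exp (Fintype.card ι * p / 2 * g ^ 2) *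
          (1 + 32 * (8 * Real.exp 72 * (c * √p) ^ 2 * Real.exp (1 / 4 * g ^ 2))) := by gcongr
    _ = _ := by
        rw [hs_sq, add_mul _ (1 / 4), Real.exp_add]
        ring

lemma expect_expect_exp_sq_signSum_le (hA : (2 : ℝ) ^ ((Fintype.card ι : ℝ) - c) ≤ #A)
    (hc : 1 ≤ c) (hp : 0 ≤ p) (hnp : Fintype.card ι * p ≤ 1 / 4) (hcp : c ^ 2 * p ≤ 1) :
    𝔼 x ∈ A, 𝔼 y ∈ A, Real.exp (p * signSum (x + y) ^ 2 / 2) ≤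
      (√(1 - Fintype.card ι * p))⁻¹ + 512 * Real.exp 72 * (c ^ 2 * p) := by
  set α := Fintype.card ι * p
  have integrable_main := integrable_exp_mul_sq_gaussianReal (show α / 2 < 1 / 2 by linarith)
  have integrable_tail := (integrable_exp_mul_sq_gaussianReal
    (show α / 2 + 1 / 4 < 1 / 2 by linarith)).const_mul (256 * Real.exp 72 * (c ^ 2 * p))
  have inv_sqrt_le_two : (√(1 - 2 * (α / 2 + 1 / 4)))⁻¹ ≤ 2 := by
    refine inv_le_of_inv_le₀ two_pos (Real.le_sqrt_of_sq_le ?_)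
    linarith
  calc 𝔼 x ∈ A, 𝔼 y ∈ A, Real.exp (p * signSum (x + y) ^ 2 / 2)
      = ∫ g, 𝔼 x ∈ A, 𝔼 y ∈ A, Real.cosh (√p * signSum (x + y) * g) ∂gaussianReal 0 1 :=
        expect_expect_exp_sq_signSum_eq_integral A hp
    _ ≤ ∫ g, (Real.exp (α / 2 * g ^ 2) + 256 * Real.exp 72 * (c ^ 2 * p) *
          Real.exp ((α / 2 + 1 / 4) * g ^ 2)) ∂gaussianReal 0 1 :=
        integral_mono_of_nonneg
          (ae_of_all _ fun g ↦ expect_nonneg fun x _ ↦ expect_nonneg fun y _ ↦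
            (Real.cosh_pos _).le)
          (integrable_main.add integrable_tail)
          (ae_of_all _ (expect_expect_cosh_sqrt_mul_signSum_le hA hc hp hcp))
    _ = (√(1 - α))⁻¹ + 256 * Real.exp 72 * (c ^ 2 * p) * (√(1 - 2 * (α / 2 + 1 / 4)))⁻¹ := by
        rw [integral_add integrable_main integrable_tail, integral_const_mul,
          integral_exp_mul_sq_gaussianReal (by linarith),
          integral_exp_mul_sq_gaussianReal (by linarith), mul_div_cancel₀ _ two_ne_zero]
    _ ≤ (√(1 - α))⁻¹ + 256 * Real.exp 72 * (c ^ 2 * p) * 2 := by gcongr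
    _ = (√(1 - α))⁻¹ + 512 * Real.exp 72 * (c ^ 2 * p) := by ring

end Gaussian

section Edges

variable {n : ℕ}

lemma two_nsmul_sum_potentialEdges {M : Type*} [AddCommMonoid M] (f : Sym2 (Fin n) → M) :
    2 • ∑ e ∈ potentialEdges n, f e = ∑ q ∈ (univ : Finset (Fin n)).offDiag, f s(q.1, q.2) := by
  have sum_lt : ∑ e ∈ potentialEdges n, f e =
      ∑ q ∈ (univ : Finset (Fin n)).offDiag with q.1 < q.2, f s(q.1, q.2) := by
    rw [← sum_sym2_filter_not_isDiag, sym2_univ, potentialEdges]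
  have sum_gt : ∑ e ∈ potentialEdges n, f e =
      ∑ q ∈ (univ : Finset (Fin n)).offDiag with ¬q.1 < q.2, f s(q.1, q.2) := by
    rw [sum_lt]
    refine sum_equiv (Equiv.prodComm _ _) (fun q ↦ ?_) fun q _ ↦ congrArg f Sym2.eq_swap
    simp only [mem_filter, mem_offDiag, mem_univ, true_and, Equiv.prodComm_apply, Prod.fst_swap,
      Prod.snd_swap]
    lia
  rw [two_nsmul, ← sum_filter_add_sum_filter_not _ (fun q : Fin n × Fin n ↦ q.1 < q.2), ← sum_lt,
    ← sum_gt]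

lemma sum_potentialEdges_of_mul {s : Fin n → ℝ} {f : Sym2 (Fin n) → ℝ}
    (hf : ∀ u v, f s(u, v) = s u * s v) :
    ∑ e ∈ potentialEdges n, f e = ((∑ i, s i) ^ 2 - ∑ i, s i ^ 2) / 2 := by
  have two_mul_sum := two_nsmul_sum_potentialEdges f
  have sq_sum : (∑ i, s i) ^ 2 = ∑ i, s i ^ 2 + 2 • ∑ e ∈ potentialEdges n, f e := by
    rw [two_mul_sum, sq, sum_mul_sum, ← sum_product', ← diag_union_offDiag,
      sum_union (disjoint_diag_offDiag _), sum_diag]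
    simp only [hf, sq]
  rw [sq_sum, add_sub_cancel_left, nsmul_eq_mul, Nat.cast_ofNat, mul_div_cancel_left₀ _ two_ne_zero]

lemma card_potentialEdges (n : ℕ) : (#(potentialEdges n) : ℝ) = ((n : ℝ) ^ 2 - n) / 2 := by
  simpa using sum_potentialEdges_of_mul (n := n) (s := 1) (f := 1) (by simp)

lemma edgeParity_add (x y : Fin n → ZMod 2) (e : Sym2 (Fin n)) :
    edgeParity (x + y) e = edgeParity x e + edgeParity y e := by
  induction e with
  | h u v => exact add_add_add_comm _ _ _ _

lemma sum_paritySign_edgeParity (z : Fin n → ZMod 2) :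
    ∑ e ∈ potentialEdges n, paritySign (edgeParity z e) = (signSum z ^ 2 - n) / 2 := by
  rw [sum_potentialEdges_of_mul fun u v ↦ paritySign.map_add_eq_mul (z u) (z v)]
  simp [paritySign_sq, signSum]

lemma abs_add_sq_add_log_one_sub_le {x : ℝ} (hx : |x| ≤ 1 / 2) :
    |x + x ^ 2 / 2 + Real.log (1 - x)| ≤ 2 * |x| ^ 3 := by
  have taylor := Real.abs_log_sub_add_sum_range_le (show |x| < 1 by linarith) 2
  norm_num [sum_range_succ] at taylor
  refine taylor.trans ?_
  rw [div_le_iff₀ (by linarith)]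
  nlinarith [pow_nonneg (abs_nonneg x) 3]

lemma one_add_mul_paritySign_le {p : ℝ} (hp : 0 ≤ p) (hp_le : p ≤ 1 / 2) (a : ZMod 2) :
    1 + p * paritySign a ≤ Real.exp (p * paritySign a + (2 * p ^ 3 - p ^ 2 / 2)) := by
  have abs_eq : |-(p * paritySign a)| = p := by
    rcases paritySign_eq_one_or_neg_one a with h | h <;> simp [h, abs_of_nonneg hp]
  have log_le := (abs_le.1 (abs_add_sq_add_log_one_sub_le (abs_eq.trans_le hp_le))).2
  rw [abs_eq, neg_sq, mul_pow, paritySign_sq, mul_one, sub_neg_eq_add] at log_le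
  have pos : 0 < 1 + p * paritySign a := by
    rcases paritySign_eq_one_or_neg_one a with h | h <;> rw [h] <;> linarith
  rw [← Real.log_le_iff_le_exp pos]
  linarith

lemma inv_sqrt_one_sub_le_exp {x : ℝ} (hx : 0 ≤ x) (hx_le : x ≤ 1 / 2) :
    (√(1 - x))⁻¹ ≤ Real.exp (x / 2 + x ^ 2 / 4 + x ^ 3) := by
  have log_ge := (abs_le.1 (abs_add_sq_add_log_one_sub_le (x := x) (by rwa [abs_of_nonneg hx]))).1
  rw [abs_of_nonneg hx] at log_ge
  have sqrt_pos : 0 < √(1 - x) := Real.sqrt_pos.2 (by linarith)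
  rw [← Real.log_le_iff_le_exp (inv_pos.2 sqrt_pos), Real.log_inv, Real.log_sqrt (by linarith)]
  linarith

lemma exp_le_one_add_two_mul {x : ℝ} (hx : 0 ≤ x) (hx_le : x ≤ 1) : Real.exp x ≤ 1 + 2 * x := by
  have sub_one_le := (le_abs_self _).trans (Real.abs_exp_sub_one_le (abs_of_nonneg hx ▸ hx_le))
  rw [abs_of_nonneg hx] at sub_one_le
  linarith

lemma prod_one_add_mul_paritySign_edgeParity_le {p : ℝ} (hp : 0 ≤ p) (hnp : n * p ≤ 1 / 4)
    (z : Fin n → ZMod 2) :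
    ∏ e ∈ potentialEdges n, (1 + p * paritySign (edgeParity z e)) ≤
      Real.exp (n * p * p / 2 - n * p / 2 - (n * p) ^ 2 / 4) *
        Real.exp (p * signSum z ^ 2 / 2) := by
  obtain rfl | hn := n.eq_zero_or_pos
  · simp [potentialEdges, signSum, univ_eq_empty]
  have hn_real : (1 : ℝ) ≤ n := by exact_mod_cast hn
  have hp_le : p ≤ 1 / 4 := (le_mul_of_one_le_left hp hn_real).trans hnp
  calc ∏ e ∈ potentialEdges n, (1 + p * paritySign (edgeParity z e))
      ≤ ∏ e ∈ potentialEdges n,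
          Real.exp (p * paritySign (edgeParity z e) + (2 * p ^ 3 - p ^ 2 / 2)) := by
        refine prod_le_prod (fun e _ ↦ ?_) fun e _ ↦
          one_add_mul_paritySign_le hp (by linarith) (edgeParity z e)
        rcases paritySign_eq_one_or_neg_one (edgeParity z e) with h | h <;> rw [h] <;> linarith
    _ = Real.exp (p * ((signSum z ^ 2 - n) / 2) +
          ((n : ℝ) ^ 2 - n) / 2 * (2 * p ^ 3 - p ^ 2 / 2)) := by
        rw [← Real.exp_sum, sum_add_distrib, ← mul_sum, sum_paritySign_edgeParity, sum_const,
          nsmul_eq_mul, card_potentialEdges]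
    _ ≤ Real.exp (n * p * p / 2 - n * p / 2 - (n * p) ^ 2 / 4 + p * signSum z ^ 2 / 2) := by
        rw [Real.exp_le_exp]
        have cubic_le : (n * p) * (n * p * p) ≤ 1 / 4 * (n * p * p) := by gcongr
        nlinarith [pow_nonneg hp 3]
    _ = _ := Real.exp_add _ _

lemma expect_expect_prod_edges_le {A : Finset (Fin n → ZMod 2)} {c p : ℝ}
    (hA : (2 : ℝ) ^ ((n : ℝ) - c) ≤ #A) (hc : 1 ≤ c) (hp : 0 ≤ p) (hnp : n * p ≤ 1 / 4)
    (hcp : c ^ 2 * p ≤ 1) :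
    𝔼 x ∈ A, 𝔼 y ∈ A, ∏ e ∈ potentialEdges n, (1 + p * paritySign (edgeParity (x + y) e)) ≤
      1 + 2 * (n * p) ^ 3 + 513 * Real.exp 72 * (c ^ 2 * p) := by
  have p_le : p ≤ c ^ 2 * p := le_mul_of_one_le_left hp (one_le_pow₀ hc)
  have gaussian := expect_expect_exp_sq_signSum_le (A := A) (by simpa using hA) hc hp
    (by simpa using hnp) hcp
  rw [Fintype.card_fin] at gaussian
  set α := n * p
  set R := 512 * Real.exp 72 * (c ^ 2 * p)
  have α_nonneg : 0 ≤ α := by positivity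
  have αp_le : α * p ≤ α := mul_le_of_le_one_right α_nonneg (p_le.trans hcp)
  have αp_le' : α * p ≤ 1 / 4 * p := by gcongr
  have α_cubed_le : α ^ 3 ≤ (1 / 4) ^ 3 := by gcongr
  have exp_le_one : Real.exp (α * p / 2 - α / 2 - α ^ 2 / 4) ≤ 1 :=
    Real.exp_le_one_iff.2 (by nlinarith)
  have exp_le : Real.exp (α * p / 2 + α ^ 3) ≤ 1 + 2 * (α * p / 2 + α ^ 3) :=
    exp_le_one_add_two_mul (by positivity) (by linarith)
  calc 𝔼 x ∈ A, 𝔼 y ∈ A, ∏ e ∈ potentialEdges n, (1 + p * paritySign (edgeParity (x + y) e))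
      ≤ Real.exp (α * p / 2 - α / 2 - α ^ 2 / 4) *
          𝔼 x ∈ A, 𝔼 y ∈ A, Real.exp (p * signSum (x + y) ^ 2 / 2) := by
        simp only [mul_expect]
        exact expect_le_expect fun x _ ↦ expect_le_expect fun y _ ↦
          prod_one_add_mul_paritySign_edgeParity_le hp hnp (x + y)
    _ ≤ Real.exp (α * p / 2 - α / 2 - α ^ 2 / 4) *
          (Real.exp (α / 2 + α ^ 2 / 4 + α ^ 3) + R) := by
        gcongr
        exact gaussian.trans (by gcongr; exact inv_sqrt_one_sub_le_exp α_nonneg (by linarith))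
    _ ≤ Real.exp (α * p / 2 + α ^ 3) + 1 * R := by
        rw [mul_add, ← Real.exp_add]
        exact add_le_add (Real.exp_le_exp.2 (by linarith)) (by gcongr)
    _ ≤ 1 + 2 * α ^ 3 + 513 * Real.exp 72 * (c ^ 2 * p) := by
        have : c ^ 2 * p ≤ Real.exp 72 * (c ^ 2 * p) :=
          le_mul_of_one_le_left (by positivity) (Real.one_le_exp (by norm_num))
        linarith

end Edges

section TotalVariation

variable {Ω : Type*} [Fintype Ω] {q r : Ω → ℝ}

lemma tvDist_const_sq_le [Nonempty Ω] (hq : ∑ ω, q ω = 1) :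
    tvDist q (fun _ ↦ (Fintype.card Ω : ℝ)⁻¹) ^ 2 ≤ (Fintype.card Ω * ∑ ω, q ω ^ 2 - 1) / 4 := by
  have card_ne_zero : (Fintype.card Ω : ℝ) ≠ 0 := by positivity
  have cauchy_schwarz :=
    sq_sum_le_card_mul_sum_sq (s := univ) (f := fun ω ↦ |q ω - (Fintype.card Ω : ℝ)⁻¹|)
  have sum_sq_sub : ∑ ω, (q ω - (Fintype.card Ω : ℝ)⁻¹) ^ 2 =
      ∑ ω, q ω ^ 2 - (Fintype.card Ω : ℝ)⁻¹ := by
    simp only [sub_sq, sum_add_distrib, sum_sub_distrib, ← sum_mul, ← mul_sum, hq, sum_const,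
      card_univ, nsmul_eq_mul]
    field_simp
    ring
  simp only [sq_abs, sum_sq_sub, mul_sub, card_univ, mul_inv_cancel₀ card_ne_zero] at cauchy_schwarz
  rw [tvDist, mul_pow]
  linarith

lemma tvDist_nonneg (q r : Ω → ℝ) : 0 ≤ tvDist q r :=
  mul_nonneg (by norm_num) (sum_nonneg fun _ _ ↦ abs_nonneg _)

lemma tvDist_le_one (hq : 0 ≤ q) (hr : 0 ≤ r) (hq_sum : ∑ ω, q ω = 1) (hr_sum : ∑ ω, r ω = 1) :
    tvDist q r ≤ 1 := by
  calc tvDist q r ≤ 1 / 2 * ∑ ω, (q ω + r ω) := by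
        rw [tvDist]
        gcongr with ω
        exact (abs_sub _ _).trans_eq (by rw [abs_of_nonneg (hq ω), abs_of_nonneg (hr ω)])
    _ = 1 := by
        rw [sum_add_distrib, hq_sum, hr_sum]
        norm_num

end TotalVariation

section Pushforward

variable {X Ω : Type*} [Fintype Ω] [DecidableEq Ω] (A : Finset X) (φ : X → Ω)

lemma sum_expect_ite_eq_one (hA : A.Nonempty) :
    ∑ ω, 𝔼 x ∈ A, (if φ x = ω then 1 else 0 : ℝ) = 1 := by
  rw [← expect_sum_comm]
  simp [expect_const hA]

lemma sum_expect_ite_sq :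
    ∑ ω, (𝔼 x ∈ A, (if φ x = ω then 1 else 0 : ℝ)) ^ 2 =
      𝔼 x ∈ A, 𝔼 y ∈ A, if φ x = φ y then 1 else 0 := by
  simp only [sq, expect_mul_expect]
  simp_rw [← expect_sum_comm]
  simp

end Pushforward

section RandomGraph

variable {n : ℕ} {A : Finset (Fin n → ZMod 2)}

open Classical in
/-- The distribution `p_M` of `M x` for `x` uniform on `A`, where `M` is the incidence matrix of
the graph with edge set `S`; the coordinates of `M x` are indexed by the edges themselves. -/
noncomputable def edgeParityDist (A : Finset (Fin n → ZMod 2)) (S : Finset (Sym2 (Fin n)))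
    (z : ↥S → ZMod 2) : ℝ :=
  ((A.filter (fun x => ∀ e : ↥S, edgeParity x ↑e = z e)).card : ℝ) / (A.card : ℝ)

lemma edgeParityDist_eq_expect (A : Finset (Fin n → ZMod 2)) (S : Finset (Sym2 (Fin n)))
    (z : ↥S → ZMod 2) :
    edgeParityDist A S z = 𝔼 x ∈ A, if (fun e : ↥S ↦ edgeParity x e) = z then 1 else 0 := by
  rw [edgeParityDist, expect_eq_sum_div_card, sum_boole]
  congr! 4
  exact funext_iff.symm

lemma sum_edgeParityDist (hA : A.Nonempty) (S : Finset (Sym2 (Fin n))) :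
    ∑ z, edgeParityDist A S z = 1 := by
  simp only [edgeParityDist_eq_expect]
  exact sum_expect_ite_eq_one A _ hA

lemma card_mul_sum_edgeParityDist_sq (A : Finset (Fin n → ZMod 2)) (S : Finset (Sym2 (Fin n))) :
    2 ^ #S * ∑ z, edgeParityDist A S z ^ 2 =
      𝔼 x ∈ A, 𝔼 y ∈ A, ∏ e ∈ S, (1 + paritySign (edgeParity (x + y) e)) := by
  have prod_eq (x y : Fin n → ZMod 2) :
      ∏ e ∈ S, (1 + paritySign (edgeParity (x + y) e)) =
        2 ^ #S *
          if (fun e : ↥S ↦ edgeParity x e) = (fun e : ↥S ↦ edgeParity y e) then 1 else 0 := by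
    simp only [edgeParity_add, one_add_paritySign_add, prod_ite_zero, prod_const, funext_iff,
      Subtype.forall, mul_ite, mul_one, mul_zero]
  simp only [edgeParityDist_eq_expect, sum_expect_ite_sq, prod_eq, mul_expect]

lemma tvDist_edgeParityDist_sq_le (hA : A.Nonempty) (S : Finset (Sym2 (Fin n))) :
    tvDist (edgeParityDist A S) (fun _ ↦ ((2 : ℝ) ^ #S)⁻¹) ^ 2 ≤
      (𝔼 x ∈ A, 𝔼 y ∈ A, ∏ e ∈ S, (1 + paritySign (edgeParity (x + y) e)) - 1) / 4 := by
  rw [← card_mul_sum_edgeParityDist_sq]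
  simpa [ZMod.card] using tvDist_const_sq_le (sum_edgeParityDist hA S)

lemma tvDist_edgeParityDist_sq_le_one (hA : A.Nonempty) (S : Finset (Sym2 (Fin n))) :
    tvDist (edgeParityDist A S) (fun _ ↦ ((2 : ℝ) ^ #S)⁻¹) ^ 2 ≤ 1 := by
  refine pow_le_one₀ (tvDist_nonneg _ _) (tvDist_le_one (fun z ↦ ?_) (fun _ ↦ ?_)
    (sum_edgeParityDist hA S) ?_)
  · exact div_nonneg (Nat.cast_nonneg _) (Nat.cast_nonneg _)
  · exact inv_nonneg.2 (by positivity)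
  · simp [ZMod.card]

lemma sum_erWeight_mul_prod (p : ℝ) (a : Sym2 (Fin n) → ℝ) :
    ∑ S ∈ (potentialEdges n).powerset, erWeight n p S * ∏ e ∈ S, (1 + a e) =
      ∏ e ∈ potentialEdges n, (1 + p * a e) := by
  have split (e : Sym2 (Fin n)) : 1 + p * a e = p * (1 + a e) + (1 - p) := by ring
  rw [prod_congr rfl fun e _ ↦ split e, prod_add]
  refine sum_congr rfl fun S hS ↦ ?_
  rw [prod_mul_distrib, prod_const, prod_const, card_sdiff_of_subset (mem_powerset.1 hS), erWeight]
  ring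

lemma sum_erWeight (n : ℕ) (p : ℝ) : ∑ S ∈ (potentialEdges n).powerset, erWeight n p S = 1 := by
  simpa using sum_erWeight_mul_prod (n := n) p 0

lemma erWeight_nonneg {p : ℝ} (hp : 0 ≤ p) (hp_le : p ≤ 1) (S : Finset (Sym2 (Fin n))) :
    0 ≤ erWeight n p S :=
  mul_nonneg (pow_nonneg hp _) (pow_nonneg (sub_nonneg.2 hp_le) _)

lemma sum_erWeight_mul_tvDist_sq_le_one (hA : A.Nonempty) {p : ℝ} (hp : 0 ≤ p) (hp_le : p ≤ 1) :
    ∑ S ∈ (potentialEdges n).powerset,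
        erWeight n p S * tvDist (edgeParityDist A S) (fun _ ↦ ((2 : ℝ) ^ #S)⁻¹) ^ 2 ≤ 1 :=
  (sum_le_sum fun S _ ↦ mul_le_of_le_one_right (erWeight_nonneg hp hp_le S)
    (tvDist_edgeParityDist_sq_le_one hA S)).trans_eq (sum_erWeight n p)

lemma sum_erWeight_mul_tvDist_sq_le_expect (hA : A.Nonempty) {p : ℝ} (hp : 0 ≤ p)
    (hp_le : p ≤ 1) :
    ∑ S ∈ (potentialEdges n).powerset,
        erWeight n p S * tvDist (edgeParityDist A S) (fun _ ↦ ((2 : ℝ) ^ #S)⁻¹) ^ 2 ≤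
      (𝔼 x ∈ A, 𝔼 y ∈ A, ∏ e ∈ potentialEdges n, (1 + p * paritySign (edgeParity (x + y) e)) - 1)
        / 4 := by
  calc ∑ S ∈ (potentialEdges n).powerset,
        erWeight n p S * tvDist (edgeParityDist A S) (fun _ ↦ ((2 : ℝ) ^ #S)⁻¹) ^ 2
      ≤ ∑ S ∈ (potentialEdges n).powerset, erWeight n p S *
          ((𝔼 x ∈ A, 𝔼 y ∈ A, ∏ e ∈ S, (1 + paritySign (edgeParity (x + y) e)) - 1) / 4) :=
        sum_le_sum fun S _ ↦ mul_le_mul_of_nonneg_left (tvDist_edgeParityDist_sq_le hA S)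
          (erWeight_nonneg hp hp_le S)
    _ = ((∑ S ∈ (potentialEdges n).powerset, erWeight n p S *
          𝔼 x ∈ A, 𝔼 y ∈ A, ∏ e ∈ S, (1 + paritySign (edgeParity (x + y) e))) - 1) / 4 := by
        simp only [← mul_div_assoc, ← sum_div, mul_sub, sum_sub_distrib, mul_one, sum_erWeight]
    _ = _ := by
        simp only [mul_expect, ← expect_sum_comm, sum_erWeight_mul_prod]

theorem sum_erWeight_mul_tvDist_sq_le {c p : ℝ} (hA : (2 : ℝ) ^ ((n : ℝ) - c) ≤ #A) (hc : 1 ≤ c)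
    (hp : 0 ≤ p) (hnp : n * p ≤ 1 / 4) (hcp : c ^ 2 * p ≤ 1) :
    ∑ S ∈ (potentialEdges n).powerset,
        erWeight n p S * tvDist (edgeParityDist A S) (fun _ ↦ ((2 : ℝ) ^ #S)⁻¹) ^ 2 ≤
      513 * Real.exp 72 * (c ^ 2 * p + (n * p) ^ 3) := by
  have p_le_one : p ≤ 1 := (le_mul_of_one_le_left hp (one_le_pow₀ hc)).trans hcp
  have cubic_le : (n * p) ^ 3 ≤ Real.exp 72 * (n * p) ^ 3 :=
    le_mul_of_one_le_left (by positivity) (Real.one_le_exp (by norm_num))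
  have cubic_nonneg : 0 ≤ (n * p) ^ 3 := by positivity
  have quadratic_nonneg : 0 ≤ Real.exp 72 * (c ^ 2 * p) := by positivity
  calc ∑ S ∈ (potentialEdges n).powerset,
        erWeight n p S * tvDist (edgeParityDist A S) (fun _ ↦ ((2 : ℝ) ^ #S)⁻¹) ^ 2
      ≤ (𝔼 x ∈ A, 𝔼 y ∈ A, ∏ e ∈ potentialEdges n,
          (1 + p * paritySign (edgeParity (x + y) e)) - 1) / 4 :=
        sum_erWeight_mul_tvDist_sq_le_expect (nonempty_of_rpow_le_card hA) hp p_le_one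
    _ ≤ (1 + 2 * (n * p) ^ 3 + 513 * Real.exp 72 * (c ^ 2 * p) - 1) / 4 := by
        gcongr
        exact expect_expect_prod_edges_le hA hc hp hnp hcp
    _ ≤ 513 * Real.exp 72 * (c ^ 2 * p + (n * p) ^ 3) := by linarith

end RandomGraph

section Parameters

lemma natCast_rpow_le_natCast_rpow (n : ℕ) {s t : ℝ} (hs : s ≠ 0) (hst : s ≤ t) :
    (n : ℝ) ^ s ≤ (n : ℝ) ^ t := by
  obtain rfl | hn := n.eq_zero_or_pos
  · rw [Nat.cast_zero, Real.zero_rpow hs]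
    positivity
  · exact Real.rpow_le_rpow_of_exponent_le (by exact_mod_cast hn) hst

variable {n : ℕ} {γ α : ℝ}

lemma one_le_logb_two_div (hγ : 0 < γ) (hγ_le : γ ≤ 1) : 1 ≤ Real.logb 2 (2 / γ) := by
  rw [Real.le_logb_iff_rpow_le one_lt_two (by positivity), Real.rpow_one, le_div_iff₀ hγ]
  linarith

lemma logb_two_le_self {x : ℝ} (hx : 0 < x) : Real.logb 2 x ≤ x := by
  have log_half_le := Real.log_le_sub_one_of_pos (half_pos hx)
  rw [Real.log_div hx.ne' two_ne_zero] at log_half_le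
  rw [Real.logb, div_le_iff₀ (Real.log_pos one_lt_two)]
  nlinarith [Real.log_two_gt_d9, Real.log_two_lt_d9]

lemma inv_le_pow_four_of_rpow_lt (hγ : (n : ℝ) ^ (-(1 : ℝ) / 4) < γ) : (n : ℝ)⁻¹ ≤ γ ^ 4 := by
  calc (n : ℝ)⁻¹ = ((n : ℝ) ^ (-(1 : ℝ) / 4)) ^ 4 := by
        rw [← Real.rpow_natCast, ← Real.rpow_mul n.cast_nonneg, ← Real.rpow_neg_one]
        norm_num
    _ ≤ γ ^ 4 := by gcongr

lemma sq_mul_sqrt_add_logb_mul_div_le (hγ : (n : ℝ) ^ (-(1 : ℝ) / 4) < γ) (hγ_le : γ ≤ 1)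
    (hα : 0 ≤ α) :
    (γ * √n + Real.logb 2 (2 / γ)) ^ 2 * (α / n) ≤ 10 * α * γ ^ 2 := by
  obtain rfl | hn := n.eq_zero_or_pos
  · simp only [Nat.cast_zero, div_zero, mul_zero]
    positivity
  have hγ_pos : 0 < γ := (by positivity : 0 ≤ (n : ℝ) ^ (-(1 : ℝ) / 4)).trans_lt hγ
  have logb_nonneg := zero_le_one.trans (one_le_logb_two_div hγ_pos hγ_le)
  have logb_le : Real.logb 2 (2 / γ) ≤ 2 / γ := logb_two_le_self (by positivity)
  have logb_sq_div_le : Real.logb 2 (2 / γ) ^ 2 * (n : ℝ)⁻¹ ≤ 4 * γ ^ 2 := by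
    calc Real.logb 2 (2 / γ) ^ 2 * (n : ℝ)⁻¹ ≤ (2 / γ) ^ 2 * γ ^ 4 := by
          gcongr
          exact inv_le_pow_four_of_rpow_lt hγ
      _ = 4 * γ ^ 2 := by
          field_simp
          ring
  calc (γ * √n + Real.logb 2 (2 / γ)) ^ 2 * (α / n)
      ≤ 2 * ((γ * √n) ^ 2 + Real.logb 2 (2 / γ) ^ 2) * (α / n) := by
        gcongr
        exact add_sq_le
    _ = α * (2 * γ ^ 2 + 2 * (Real.logb 2 (2 / γ) ^ 2 * (n : ℝ)⁻¹)) := by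
        rw [mul_pow, Real.sq_sqrt n.cast_nonneg]
        field_simp
    _ ≤ α * (2 * γ ^ 2 + 2 * (4 * γ ^ 2)) := by gcongr
    _ = 10 * α * γ ^ 2 := by ring

end Parameters

theorem stmt7_general {n : ℕ} {γ α c' : ℝ} {A : Finset (Fin n → ZMod 2)}
    (hγ : (n : ℝ) ^ (-(1 : ℝ) / 4) < γ) (hα : 0 ≤ α) (hαn : α / n ≤ 1)
    (hc' : c' ≤ γ * √n + Real.logb 2 (2 / γ)) (hA : (2 : ℝ) ^ ((n : ℝ) - c') ≤ #A) :
    ∑ S ∈ (potentialEdges n).powerset,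
        erWeight n (α / n) S * tvDist (edgeParityDist A S) (fun _ ↦ ((2 : ℝ) ^ #S)⁻¹) ^ 2 ≤
      513 * Real.exp 72 * (γ ^ 2 + α ^ 3) := by
  set c := γ * √n + Real.logb 2 (2 / γ)
  have hγ_pos : 0 < γ := (by positivity : 0 ≤ (n : ℝ) ^ (-(1 : ℝ) / 4)).trans_lt hγ
  have hp : 0 ≤ α / n := by positivity
  by_cases small : γ ≤ 1 ∧ α ≤ 1 / 10
  · obtain ⟨γ_le, α_le⟩ := small
    have hA_c : (2 : ℝ) ^ ((n : ℝ) - c) ≤ #A :=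
      (Real.rpow_le_rpow_of_exponent_le one_le_two (by linarith)).trans hA
    have one_le_c : 1 ≤ c :=
      (one_le_logb_two_div hγ_pos γ_le).trans (le_add_of_nonneg_left (by positivity))
    have np_le : n * (α / n) ≤ α := by
      rw [mul_div_left_comm]
      exact mul_le_of_le_one_right hα (div_self_le_one _)
    have c_sq_mul_le : c ^ 2 * (α / n) ≤ γ ^ 2 :=
      (sq_mul_sqrt_add_logb_mul_div_le hγ γ_le hα).trans
        (mul_le_of_le_one_left (by positivity) (by linarith))
    refine (sum_erWeight_mul_tvDist_sq_le hA_c one_le_c hp (by linarith)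
      (c_sq_mul_le.trans (pow_le_one₀ hγ_pos.le γ_le))).trans ?_
    gcongr
  · have one_le : 1 ≤ 513 * 73 * (γ ^ 2 + α ^ 3) := by
      obtain γ_gt | α_gt : 1 < γ ∨ 1 / 10 < α := by
        by_contra! h
        exact small h
      · nlinarith [pow_nonneg hα 3]
      · have : (1 / 10) ^ 3 ≤ α ^ 3 := by gcongr
        nlinarith
    refine (sum_erWeight_mul_tvDist_sq_le_one (nonempty_of_rpow_le_card hA) hp hαn).trans
      (one_le.trans ?_)
    gcongr
    linarith [Real.add_one_le_exp (72 : ℝ)]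

open Classical in
/-- there are absolute constants `C > 0`, `α₀ > 0` and `γ₀ ∈ (0,1)` such that
for all `γ ∈ (n^{-1/10}, γ₀)`, `α ∈ (n^{-1/10}, 1/16)` with `α < α₀`,
`c' ≤ γ√n + log₂(2/γ)`, and `A ⊆ {0,1}^n` with `|A| ≥ 2^{n−c'}`: for `G ∼ G(n, α/n)` with
edge set `S` (so `r = |S|` edges, incidence matrix `M`), the distribution
`p_M(z) = |{x ∈ A : Mx = z}|/|A|` on `{0,1}^r` (indexed here by `z : ↥S → ZMod 2`, where
`(Mx)_e = x u + x v` for `e = {u,v}`) satisfies `E_G[‖p_M − U_r‖²_tvd] ≤ C(γ² + α³)`. -/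
theorem stmt7 :
    ∃ C : ℝ, 0 < C ∧ ∃ α₀ : ℝ, 0 < α₀ ∧ ∃ γ₀ : ℝ, 0 < γ₀ ∧ γ₀ < 1 ∧
      ∀ (n : ℕ) (γ α c' : ℝ) (A : Finset (Fin n → ZMod 2)),
        (n : ℝ) ^ (-(1 : ℝ) / 10) < γ → γ < γ₀ →
        (n : ℝ) ^ (-(1 : ℝ) / 10) < α → α < 1 / 16 → α < α₀ →
        c' ≤ γ * Real.sqrt n + Real.logb 2 (2 / γ) →
        (2 : ℝ) ^ ((n : ℝ) - c') ≤ (A.card : ℝ) →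
        ∑ S ∈ (potentialEdges n).powerset,
            erWeight n (α / n) S *
              (tvDist
                  (fun z : ↥S → ZMod 2 =>
                    ((A.filter (fun x => ∀ e : ↥S, edgeParity x ↑e = z e)).card : ℝ) /
                      (A.card : ℝ))
                  (fun _ : ↥S → ZMod 2 => ((2 : ℝ) ^ S.card)⁻¹)) ^ 2
          ≤ C * (γ ^ 2 + α ^ 3) := by
  refine ⟨513 * Real.exp 72, by positivity, 1, one_pos, 1 / 2, by norm_num, by norm_num, ?_⟩
  intro n γ α c' A hγ _ hα hα_lt _ hc' hA
  have hα_nonneg : 0 ≤ α := (by positivity : 0 ≤ (n : ℝ) ^ (-(1 : ℝ) / 10)).trans hα.le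
  have hp_le : α / n ≤ α := mul_le_of_le_one_right hα_nonneg (Nat.cast_inv_le_one n)
  exact stmt7_general
    ((natCast_rpow_le_natCast_rpow n (by norm_num) (by norm_num)).trans_lt hγ)
    hα_nonneg (by linarith) hc' hA
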